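/- arXiv:math/0106077 — 2 statements merged into one kernel-verified Lean document; each statement's English description precedes it below -/
import Mathlib

section
/- Let f : ℝ → ℝ be continuous with compact support contained in [0,∞), and define f̃(t) = ∫₀^t f(s) ds. Then ∫₀^∞ f̃(t)² e^{−t} dt ≤ 4 ∫₀^∞ f(t)² e^{−t} dt. -/
/-!
Write `F t = ∫₀ᵗ f` and `G t = F t ^ 2 * exp (-t)`, so that `G' = (2 F f - F²) exp (-t)`.
Expanding `(F - 2 f)² ≥ 0` gives the pointwise bound `2 G' ≤ (4 f² - F²) exp (-t)`.
Since `F` is bounded by `∫ |f|`, `G` tends to `0` at infinity, and `G 0 = 0`; hence `∫₀^∞ G' = 0`,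
and integrating the pointwise bound over `(0, ∞)` yields the inequality.
-/

open MeasureTheory Filter Topology in
/-- Hardy-type inequality with exponentially decaying weight: for `f`
continuous with compact support in `[0,∞)` and `f̃(t) = ∫₀ᵗ f`,
`∫₀^∞ f̃² e^{-t} ≤ 4 ∫₀^∞ f² e^{-t}`. -/
theorem stmt9 (f : ℝ → ℝ) (hf : Continuous f) (hsupp : HasCompactSupport f)
    (hsupp0 : Function.support f ⊆ Set.Ici 0) :
    ∫ t in Set.Ioi (0 : ℝ), (∫ s in (0 : ℝ)..t, f s) ^ 2 * Real.exp (-t)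
      ≤ 4 * ∫ t in Set.Ioi (0 : ℝ), f t ^ 2 * Real.exp (-t) := by
  set F : ℝ → ℝ := fun t => ∫ s in (0 : ℝ)..t, f s with hF
  have hFd : ∀ t, HasDerivAt F (f t) t := fun t => hf.integral_hasStrictDerivAt 0 t |>.hasDerivAt
  have hFc : Continuous F := continuous_iff_continuousAt.2 fun t => (hFd t).continuousAt
  have hF0 : F 0 = 0 := by simp [hF]
  obtain ⟨C, hC⟩ : ∃ C, ∀ t, F t ^ 2 ≤ C := by
    refine ⟨(∫ s, ‖f s‖) ^ 2, fun t => ?_⟩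
    have h1 : ‖F t‖ ≤ ∫ s, ‖f s‖ :=
      intervalIntegral.norm_integral_le_integral_norm_uIoc.trans
        (setIntegral_le_integral (hf.integrable_of_hasCompactSupport hsupp).norm
          (Eventually.of_forall fun s => norm_nonneg _))
    rw [← sq_abs]
    exact pow_le_pow_left₀ (abs_nonneg _) h1 2
  have hexp : Continuous fun t : ℝ => Real.exp (-t) := by fun_prop
  have hexpi : IntegrableOn (fun t : ℝ => Real.exp (-t)) (Set.Ioi 0) := integrableOn_exp_neg_Ioi 0
  have hint1 : IntegrableOn (fun t => F t ^ 2 * Real.exp (-t)) (Set.Ioi 0) := by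
    refine Integrable.mono' (hexpi.const_mul C)
      ((hFc.pow 2).mul hexp).aestronglyMeasurable (Eventually.of_forall fun t => ?_)
    rw [Real.norm_of_nonneg (by positivity)]
    exact mul_le_mul_of_nonneg_right (hC t) (Real.exp_pos _).le
  have hint2 : IntegrableOn (fun t => f t ^ 2 * Real.exp (-t)) (Set.Ioi 0) := by
    have h : Integrable (fun t => f t * (f t * Real.exp (-t))) :=
      (hf.mul (hf.mul hexp)).integrable_of_hasCompactSupport hsupp.mul_right
    refine h.integrableOn.congr_fun (fun t _ => ?_) measurableSet_Ioi
    ring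
  have hint3 : IntegrableOn (fun t => f t * (2 * F t * Real.exp (-t))) (Set.Ioi 0) :=
    ((hf.mul ((hFc.const_mul 2).mul hexp)).integrable_of_hasCompactSupport
      hsupp.mul_right).integrableOn
  have hGd : ∀ t, HasDerivAt (fun t => F t ^ 2 * Real.exp (-t))
      (f t * (2 * F t * Real.exp (-t)) - F t ^ 2 * Real.exp (-t)) t := by
    intro t
    refine (((hFd t).pow 2).mul (hasDerivAt_neg t).exp).congr_deriv ?_
    simp only [Pi.pow_apply]
    push_cast
    ring
  have hlim : Tendsto (fun t => F t ^ 2 * Real.exp (-t)) atTop (𝓝 0) := by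
    refine squeeze_zero (g := fun t => C * Real.exp (-t)) (fun t => by positivity)
      (fun t => mul_le_mul_of_nonneg_right (hC t) (Real.exp_pos _).le) ?_
    simpa using Real.tendsto_exp_neg_atTop_nhds_zero.const_mul C
  have hzero := integral_Ioi_of_hasDerivAt_of_tendsto' (a := 0) (fun t _ => hGd t)
    (hint3.sub hint1) hlim
  have hmono : ∫ t in Set.Ioi (0 : ℝ),
        2 * (f t * (2 * F t * Real.exp (-t)) - F t ^ 2 * Real.exp (-t))
      ≤ ∫ t in Set.Ioi (0 : ℝ), (4 * (f t ^ 2 * Real.exp (-t)) - F t ^ 2 * Real.exp (-t)) := by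
    refine integral_mono ((hint3.sub hint1).const_mul 2) ((hint2.const_mul 4).sub hint1)
      fun t => ?_
    have h := mul_nonneg (sq_nonneg (F t - 2 * f t)) (Real.exp_pos (-t)).le
    dsimp only
    linarith
  rw [integral_const_mul, hzero, integral_sub (hint2.const_mul 4) hint1, integral_const_mul,
    hF0] at hmono
  linarith
end

section
/- Let μ : ℝ → ℝ be continuous with compact support contained in [0,∞), and define μ̃(t) = ∫_t^∞ μ(s) ds. Then ∫₀^∞ μ̃(t)² e^{t} dt ≤ 4 ∫₀^∞ μ(t)² e^{t} dt. -/
/-!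
Write `F t = ∫ₜ^∞ μ`, so that `F' = -μ` and `F` vanishes to the right of the support of `μ`.
Completing the square gives the pointwise identity
`(4 μ² - F²) eᵗ = (F - 2 μ)² eᵗ - 2 (F² eᵗ)'`.
Integrating over `[0, R]` with `R` beyond the support, the boundary term is `2 F(0)² ≥ 0`, and the
inequality follows. Compactness of the support makes all integrals over `(0, ∞)` equal to
integrals of continuous functions over `[0, R]`.
-/

/-- Hardy-type inequality with exponentially growing weight: for `μ`
continuous with compact support in `[0,∞)` and `μ̃(t) = ∫ₜ^∞ μ`,
`∫₀^∞ μ̃² eᵗ ≤ 4 ∫₀^∞ μ² eᵗ`. -/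
theorem stmt10 (μ : ℝ → ℝ) (hμ : Continuous μ) (hsupp : HasCompactSupport μ)
    (hsupp0 : Function.support μ ⊆ Set.Ici 0) :
    ∫ t in Set.Ioi (0 : ℝ), (∫ s in Set.Ioi t, μ s) ^ 2 * Real.exp t
      ≤ 4 * ∫ t in Set.Ioi (0 : ℝ), μ t ^ 2 * Real.exp t := by
  have hint : MeasureTheory.Integrable μ := hμ.integrable_of_hasCompactSupport hsupp
  obtain ⟨R, hR0, hR⟩ : ∃ R : ℝ, 0 ≤ R ∧ ∀ t, R < t → μ t = 0 := by
    obtain ⟨B, hB⟩ := hsupp.isCompact.bddAbove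
    refine ⟨max B 0, le_max_right _ _, fun t ht => ?_⟩
    by_contra h
    exact absurd (hB (subset_tsupport μ h)) (not_le.2 ((le_max_left _ _).trans_lt ht))
  set F : ℝ → ℝ := fun t => ∫ s in Set.Ioi t, μ s with hF
  have hFR : ∀ t, R ≤ t → F t = 0 := fun t ht =>
    MeasureTheory.setIntegral_eq_zero_of_forall_eq_zero fun s hs => hR s (ht.trans_lt hs)
  have hFeq : F = fun t => F 0 - ∫ s in (0 : ℝ)..t, μ s := by
    funext t
    rw [← intervalIntegral.integral_Ioi_sub_Ioi' hint.integrableOn hint.integrableOn]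
    simp [hF]
  have hFd : ∀ t, HasDerivAt F (-μ t) t := by
    intro t
    rw [hFeq]
    exact (hμ.integral_hasStrictDerivAt 0 t).hasDerivAt.const_sub _
  have hFc : Continuous F := continuous_iff_continuousAt.2 fun t => (hFd t).continuousAt
  have trunc : ∀ g : ℝ → ℝ, (∀ t, R < t → g t = 0) →
      ∫ t in Set.Ioi (0 : ℝ), g t = ∫ t in (0 : ℝ)..R, g t := by
    intro g hg
    rw [intervalIntegral.integral_of_le hR0]
    refine MeasureTheory.setIntegral_eq_of_subset_of_forall_sdiff_eq_zero measurableSet_Ioi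
      Set.Ioc_subset_Ioi_self fun t ht => hg t ?_
    by_contra h
    exact ht.2 ⟨ht.1, not_lt.1 h⟩
  change ∫ t in Set.Ioi (0 : ℝ), F t ^ 2 * Real.exp t ≤ _
  rw [trunc _ fun t ht => by simp [hFR t ht.le], trunc _ fun t ht => by simp [hR t ht]]
  have hG : ∫ t in (0 : ℝ)..R, (F t ^ 2 * Real.exp t - 2 * F t * μ t * Real.exp t)
      = F R ^ 2 * Real.exp R - F 0 ^ 2 * Real.exp 0 := by
    refine intervalIntegral.integral_eq_sub_of_hasDerivAt
      (f := fun t => F t ^ 2 * Real.exp t) (fun t _ => ?_)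
      (Continuous.intervalIntegrable (by fun_prop) _ _)
    refine (((hFd t).fun_pow 2).fun_mul (Real.hasDerivAt_exp t)).congr_deriv ?_
    push_cast
    ring
  rw [hFR R le_rfl] at hG
  have hsq : 0 ≤ ∫ t in (0 : ℝ)..R, (F t - 2 * μ t) ^ 2 * Real.exp t :=
    intervalIntegral.integral_nonneg hR0 fun t _ => by positivity
  have hsplit : ∫ t in (0 : ℝ)..R, (F t - 2 * μ t) ^ 2 * Real.exp t
      = 4 * (∫ t in (0 : ℝ)..R, μ t ^ 2 * Real.exp t)
        - (∫ t in (0 : ℝ)..R, F t ^ 2 * Real.exp t)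
        + 2 * ∫ t in (0 : ℝ)..R, (F t ^ 2 * Real.exp t - 2 * F t * μ t * Real.exp t) := by
    rw [← intervalIntegral.integral_const_mul, ← intervalIntegral.integral_const_mul,
      ← intervalIntegral.integral_sub, ← intervalIntegral.integral_add]
    · congr 1
      funext t
      ring
    all_goals exact Continuous.intervalIntegrable (by fun_prop) _ _
  rw [hsplit, hG, Real.exp_zero] at hsq
  nlinarith [sq_nonneg (F 0)]
end
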